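/- Under the same assumptions, the scheme is an ℓ^∞-contraction: sup_{i,j} |W^j_i - V^j_i| ≤ sup_i |W^0_i - V^0_i| for nondecreasing initial data V^0, W^0 bounded by M. -/

import Mathlib

open Real

noncomputable def discFL (ω φ : ℤ → ℝ) (i : ℤ) : ℝ :=
  ∑' k : {k : ℤ // k ≠ 0}, (φ i - φ (i + k)) * ω k

noncomputable def Dh (h : ℝ) (ω φ : ℤ → ℝ) (i : ℤ) : ℝ :=
  if discFL ω φ i ≤ 0 then (φ (i + 1) - φ i) / h else (φ i - φ (i - 1)) / h

noncomputable def Lh (h m : ℝ) (ω φ : ℤ → ℝ) (i : ℤ) : ℝ :=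
  -|Dh h ω φ i| ^ (m - 1) * discFL ω φ i

noncomputable def Sstep (τ h m : ℝ) (ω φ : ℤ → ℝ) (i : ℤ) : ℝ :=
  φ i - τ * |Dh h ω φ i| ^ (m - 1) * discFL ω φ i

theorem rpow_sub_rpow_le {p x y : ℝ} (hp : 1 ≤ p) (hx : 0 ≤ x) (hy : 0 ≤ y) :
    y ^ p - x ^ p ≤ p * y ^ (p - 1) * (y - x) := by
  rcases hy.eq_or_lt with rfl | hy
  · have h0 : (0 : ℝ) ^ p = 0 := Real.zero_rpow (by linarith)
    rcases hp.eq_or_lt with rfl | hp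
    · simp
    · rw [h0, Real.zero_rpow (by linarith)]
      have := Real.rpow_nonneg hx p
      linarith
  · have hb := one_add_mul_self_le_rpow_one_add (s := x / y - 1)
      (by have := div_nonneg hx hy.le; linarith) hp
    rw [add_sub_cancel, Real.div_rpow hx hy.le, le_div_iff₀ (Real.rpow_pos_of_pos hy p)] at hb
    have hyp : y ^ p = y ^ (p - 1) * y := by
      rw [← Real.rpow_add_one hy.ne', sub_add_cancel]
    have hexp : (1 + p * (x / y - 1)) * y ^ p = y ^ p - p * y ^ (p - 1) * (y - x) := by
      rw [hyp]
      field_simp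
      ring
    linarith

theorem rpow_mul_sub_rpow_mul_le {p R h Ω d x y F₁ F₂ : ℝ} (hp : 1 ≤ p)
    (hΩ : 0 ≤ Ω) (hd : 0 ≤ d) (hx : 0 ≤ x) (hxR : x ≤ R) (hy : 0 ≤ y) (hyR : y ≤ R)
    (hyx : h * (y - x) ≤ d) (hF₂ : 0 ≤ F₂) (hF₂R : F₂ ≤ h * R * Ω) (hF : F₂ - F₁ ≤ d * Ω) :
    y ^ p * F₂ - x ^ p * F₁ ≤ (p + 1) * R ^ p * Ω * d := by
  have hR : 0 ≤ R := hx.trans hxR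
  have hxp : x ^ p ≤ R ^ p := Real.rpow_le_rpow hx hxR (by linarith)
  have h₁ : x ^ p * (F₂ - F₁) ≤ R ^ p * (d * Ω) :=
    (mul_le_mul_of_nonneg_left hF (Real.rpow_nonneg hx p)).trans
      (mul_le_mul_of_nonneg_right hxp (mul_nonneg hd hΩ))
  have h₂ : (y ^ p - x ^ p) * F₂ ≤ p * R ^ p * Ω * d := by
    rcases le_total y x with hle | hle
    · have : y ^ p ≤ x ^ p := Real.rpow_le_rpow hy hle (by linarith)
      have h0 : 0 ≤ p * R ^ p * Ω * d := by positivity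
      nlinarith
    · have hyp : y ^ (p - 1) ≤ R ^ (p - 1) := Real.rpow_le_rpow hy hyR (by linarith)
      have hRp : R ^ (p - 1) * R = R ^ p := by
        rcases hR.eq_or_lt with rfl | hR
        · rw [Real.zero_rpow (by linarith : p ≠ 0), mul_zero]
        · rw [← Real.rpow_add_one hR.ne', sub_add_cancel]
      have hyx0 : 0 ≤ y - x := sub_nonneg.2 hle
      calc (y ^ p - x ^ p) * F₂ ≤ (p * y ^ (p - 1) * (y - x)) * F₂ :=
            mul_le_mul_of_nonneg_right (rpow_sub_rpow_le hp hx hy) hF₂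
        _ ≤ (p * R ^ (p - 1) * (y - x)) * (h * R * Ω) := by gcongr
        _ = p * (R ^ (p - 1) * R) * Ω * (h * (y - x)) := by ring
        _ ≤ p * (R ^ (p - 1) * R) * Ω * d := by gcongr
        _ = p * R ^ p * Ω * d := by rw [hRp]
  linarith

theorem summable_discFL {ω φ : ℤ → ℝ} {K : ℝ} (hω : ∀ k, 0 ≤ ω k)
    (hsum : Summable (fun k : {k : ℤ // k ≠ 0} => ω k)) (hφ : ∀ i j, φ i - φ j ≤ K) (i : ℤ) :
    Summable (fun k : {k : ℤ // k ≠ 0} => (φ i - φ (i + k)) * ω k) := by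
  refine Summable.of_norm_bounded (hsum.mul_left K) fun k => ?_
  rw [Real.norm_eq_abs, abs_mul, abs_of_nonneg (hω k)]
  refine mul_le_mul_of_nonneg_right (abs_le.2 ⟨?_, hφ _ _⟩) (hω k)
  linarith [hφ (i + k) i]

theorem abs_discFL_le {ω φ : ℤ → ℝ} {K : ℝ} (hω : ∀ k, 0 ≤ ω k)
    (hsum : Summable (fun k : {k : ℤ // k ≠ 0} => ω k)) (hφ : ∀ i j, φ i - φ j ≤ K) (i : ℤ) :
    |discFL ω φ i| ≤ K * ∑' k : {k : ℤ // k ≠ 0}, ω k := by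
  have hs := summable_discFL hω hsum hφ i
  rw [abs_le, ← tsum_mul_left, ← tsum_neg]
  refine ⟨(hsum.mul_left K).neg.tsum_le_tsum (fun k => ?_) hs,
    hs.tsum_le_tsum (fun k => ?_) (hsum.mul_left K)⟩
  · rw [← neg_mul]
    exact mul_le_mul_of_nonneg_right (by linarith [hφ (i + k) i]) (hω k)
  · exact mul_le_mul_of_nonneg_right (hφ _ _) (hω k)

theorem discFL_sub_discFL_le {ω φ ψ : ℤ → ℝ} {K : ℝ} (hω : ∀ k, 0 ≤ ω k)
    (hsum : Summable (fun k : {k : ℤ // k ≠ 0} => ω k)) (hφ : ∀ i j, φ i - φ j ≤ K)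
    (hψ : ∀ i j, ψ i - ψ j ≤ K) (hle : ∀ i, φ i ≤ ψ i) (i : ℤ) :
    discFL ω ψ i - discFL ω φ i ≤ (ψ i - φ i) * ∑' k : {k : ℤ // k ≠ 0}, ω k := by
  have hs := summable_discFL hω hsum hφ i
  have hs' := summable_discFL hω hsum hψ i
  rw [discFL, discFL, ← hs'.tsum_sub hs, ← tsum_mul_left]
  refine (hs'.sub hs).tsum_le_tsum (fun k => ?_) (hsum.mul_left _)
  rw [← sub_mul]
  exact mul_le_mul_of_nonneg_right (by linarith [hle (i + k)]) (hω k)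

theorem Sstep_mono {τ h m K : ℝ} {ω φ ψ : ℤ → ℝ} (hτ : 0 ≤ τ) (hh : 0 < h) (hm : 2 ≤ m)
    (hω : ∀ k, 0 ≤ ω k) (hsum : Summable (fun k : {k : ℤ // k ≠ 0} => ω k))
    (hcfl : τ * (m * (K / h) ^ (m - 1) * ∑' k : {k : ℤ // k ≠ 0}, ω k) ≤ 1)
    (hφm : Monotone φ) (hψm : Monotone ψ) (hφ : ∀ i j, φ i - φ j ≤ K)
    (hψ : ∀ i j, ψ i - ψ j ≤ K) (hle : ∀ i, φ i ≤ ψ i) (i : ℤ) :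
    Sstep τ h m ω φ i ≤ Sstep τ h m ω ψ i := by
  have hΩ : 0 ≤ ∑' k : {k : ℤ // k ≠ 0}, ω k := tsum_nonneg fun k => hω k
  have hF := discFL_sub_discFL_le hω hsum hφ hψ hle i
  have hFφ := abs_le.1 (abs_discFL_le hω hsum hφ i)
  have hFψ := abs_le.1 (abs_discFL_le hω hsum hψ i)
  set Ω := ∑' k : {k : ℤ // k ≠ 0}, ω k
  have hd : 0 ≤ ψ i - φ i := sub_nonneg.2 (hle i)
  have hD : ∀ θ : ℤ → ℝ, Monotone θ → (∀ i j, θ i - θ j ≤ K) →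
      0 ≤ Dh h ω θ i ∧ Dh h ω θ i ≤ K / h := fun θ hθm hθ => by
    unfold Dh
    split_ifs
    · exact ⟨div_nonneg (sub_nonneg.2 (hθm (by lia))) hh.le,
        div_le_div_of_nonneg_right (hθ _ _) hh.le⟩
    · exact ⟨div_nonneg (sub_nonneg.2 (hθm (by lia))) hh.le,
        div_le_div_of_nonneg_right (hθ _ _) hh.le⟩
  obtain ⟨hx, hxR⟩ := hD φ hφm hφ
  obtain ⟨hy, hyR⟩ := hD ψ hψm hψ
  have hKh : h * (K / h) = K := mul_div_cancel₀ K hh.ne'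
  suffices key : Dh h ω ψ i ^ (m - 1) * discFL ω ψ i - Dh h ω φ i ^ (m - 1) * discFL ω φ i ≤
      m * (K / h) ^ (m - 1) * Ω * (ψ i - φ i) by
    have h₁ := mul_le_mul_of_nonneg_left key hτ
    have h₂ := mul_le_mul_of_nonneg_right hcfl hd
    rw [Sstep, Sstep, abs_of_nonneg hx, abs_of_nonneg hy]
    linarith
  have hmm : m - 1 + 1 = m := sub_add_cancel m 1
  have hxp := Real.rpow_nonneg hx (m - 1)
  have hyp := Real.rpow_nonneg hy (m - 1)
  have hRp := Real.rpow_nonneg (hx.trans hxR) (m - 1)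
  rcases le_or_gt (discFL ω φ i) 0 with h₁ | h₁ <;> rcases le_or_gt (discFL ω ψ i) 0 with h₂ | h₂
  · have := rpow_mul_sub_rpow_mul_le (p := m - 1) (F₁ := -discFL ω ψ i) (F₂ := -discFL ω φ i)
      (by linarith) hΩ hd hy hyR hx hxR
      (by
        rw [Dh, Dh, if_pos h₁, if_pos h₂, ← sub_div, mul_div_cancel₀ _ hh.ne']
        linarith [hle (i + 1)])
      (by linarith) (by rw [hKh]; linarith) (by linarith)
    rw [hmm] at this
    linarith
  · have hxR' := Real.rpow_le_rpow hx hxR (by linarith : 0 ≤ m - 1)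
    have hyR' := Real.rpow_le_rpow hy hyR (by linarith : 0 ≤ m - 1)
    have hX := mul_le_mul_of_nonneg_right hxR' (neg_nonneg.2 h₁)
    have hY := mul_le_mul_of_nonneg_right hyR' h₂.le
    have hZ := mul_le_mul_of_nonneg_left hF hRp
    have hm1 : 0 ≤ (m - 1) * ((K / h) ^ (m - 1) * ((ψ i - φ i) * Ω)) :=
      mul_nonneg (by linarith) (mul_nonneg hRp (mul_nonneg hd hΩ))
    linarith
  · have hX := mul_nonneg hxp h₁.le
    have hY := mul_nonpos_of_nonneg_of_nonpos hyp h₂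
    have hZ : 0 ≤ m * (K / h) ^ (m - 1) * Ω * (ψ i - φ i) :=
      mul_nonneg (mul_nonneg (mul_nonneg (by linarith) hRp) hΩ) hd
    linarith
  · have := rpow_mul_sub_rpow_mul_le (p := m - 1) (F₁ := discFL ω φ i) (F₂ := discFL ω ψ i)
      (by linarith) hΩ hd hx hxR hy hyR
      (by
        rw [Dh, Dh, if_neg h₁.not_ge, if_neg h₂.not_ge, ← sub_div, mul_div_cancel₀ _ hh.ne']
        linarith [hle (i - 1)])
      h₂.le (by rw [hKh]; linarith) hF
    rwa [hmm] at this

theorem Sstep_const (τ h m c : ℝ) (ω : ℤ → ℝ) (i : ℤ) : Sstep τ h m ω (fun _ => c) i = c := by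
  simp [Sstep, discFL]

theorem Sstep_add_const (τ h m c : ℝ) (ω φ : ℤ → ℝ) (i : ℤ) :
    Sstep τ h m ω (fun j => φ j + c) i = Sstep τ h m ω φ i + c := by
  simp only [Sstep, Dh, discFL, add_sub_add_right_eq_sub]
  exact add_sub_right_comm _ _ _

theorem Sstep_comp_add_one (τ h m : ℝ) (ω φ : ℤ → ℝ) (i : ℤ) :
    Sstep τ h m ω (fun j => φ (j + 1)) i = Sstep τ h m ω φ (i + 1) := by
  have hF : discFL ω (fun j => φ (j + 1)) i = discFL ω φ (i + 1) := by
    simp only [discFL, add_right_comm]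
  simp only [Sstep, Dh, hF, sub_add_cancel, add_sub_cancel_right]

theorem sub_le_two_mul_of_abs_le {φ : ℤ → ℝ} {M : ℝ} (hφ : ∀ i, |φ i| ≤ M) (i j : ℤ) :
    φ i - φ j ≤ 2 * M := by
  linarith [(abs_le.1 (hφ i)).2, (abs_le.1 (hφ j)).1]

theorem monotone_and_abs_le_iterate {τ h m M : ℝ} {ω : ℤ → ℝ} {V : ℕ → ℤ → ℝ} (hτ : 0 ≤ τ)
    (hh : 0 < h) (hm : 2 ≤ m) (hM : 0 ≤ M) (hω : ∀ k, 0 ≤ ω k)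
    (hsum : Summable (fun k : {k : ℤ // k ≠ 0} => ω k))
    (hcfl : τ * (m * (2 * M / h) ^ (m - 1) * ∑' k : {k : ℤ // k ≠ 0}, ω k) ≤ 1)
    (hmono : Monotone (V 0)) (hbd : ∀ i, |V 0 i| ≤ M)
    (hiter : ∀ j i, V (j + 1) i = Sstep τ h m ω (V j) i) (j : ℕ) :
    Monotone (V j) ∧ ∀ i, |V j i| ≤ M := by
  induction j with
  | zero => exact ⟨hmono, hbd⟩
  | succ j ih =>
    obtain ⟨hVm, hVb⟩ := ih
    have hosc := sub_le_two_mul_of_abs_le hVb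
    refine ⟨monotone_int_of_le_succ fun i => ?_, fun i => abs_le.2 ⟨?_, ?_⟩⟩
    · rw [hiter, hiter, ← Sstep_comp_add_one]
      exact Sstep_mono hτ hh hm hω hsum hcfl hVm (fun a b hab => hVm (by lia)) hosc
        (fun _ _ => hosc _ _) (fun a => hVm (by lia)) i
    · rw [hiter, ← Sstep_const τ h m (-M) ω i]
      exact Sstep_mono hτ hh hm hω hsum hcfl monotone_const hVm (fun _ _ => by linarith) hosc
        (fun a => (abs_le.1 (hVb a)).1) i
    · rw [hiter, ← Sstep_const τ h m M ω i]
      exact Sstep_mono hτ hh hm hω hsum hcfl hVm monotone_const hosc (fun _ _ => by linarith)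
        (fun a => (abs_le.1 (hVb a)).2) i

theorem mul_le_one_of_cfl {s m M h τ Cs Ω : ℝ} (hm : 2 ≤ m) (hM : 0 < M) (hh : 0 < h)
    (hτ : 0 ≤ τ) (hCs : 0 < Cs) (hΩ : Ω ≤ Cs * h ^ (-(2 * s)))
    (hCFL : τ ≤ h ^ (2 * s + m - 1) / (Cs * m * (2 * M) ^ (m - 1))) :
    τ * (m * (2 * M / h) ^ (m - 1) * Ω) ≤ 1 := by
  have hA : 0 < (2 * M) ^ (m - 1) := Real.rpow_pos_of_pos (by linarith) _
  have hB : 0 < h ^ (m - 1) := Real.rpow_pos_of_pos hh _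
  have hC : 0 < h ^ (2 * s) := Real.rpow_pos_of_pos hh _
  have hm0 : 0 < m := by linarith
  have hpow : h ^ (2 * s + m - 1) = h ^ (2 * s) * h ^ (m - 1) := by
    rw [← Real.rpow_add hh, add_sub_assoc]
  rw [hpow, le_div_iff₀ (by positivity)] at hCFL
  rw [Real.rpow_neg hh.le] at hΩ
  rw [Real.div_rpow (by linarith) hh.le]
  calc τ * (m * ((2 * M) ^ (m - 1) / h ^ (m - 1)) * Ω)
      ≤ τ * (m * ((2 * M) ^ (m - 1) / h ^ (m - 1)) * (Cs * (h ^ (2 * s))⁻¹)) := by gcongr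
    _ = τ * (Cs * m * (2 * M) ^ (m - 1)) / (h ^ (2 * s) * h ^ (m - 1)) := by field_simp
    _ ≤ 1 := by rwa [div_le_one (by positivity)]

theorem scheme_linfty_contraction (s m M h τ Cs : ℝ) (ω : ℤ → ℝ) (V W : ℕ → ℤ → ℝ)
    (hs : 0 < s) (hs1 : s < 1) (hm : 2 ≤ m) (hM : 0 < M) (hh : 0 < h) (hτ : 0 < τ)
    (hCs : 0 < Cs)
    (hωpos : ∀ k, 0 ≤ ω k) (hωsym : ∀ k, ω (-k) = ω k)
    (hωsum : Summable (fun k : {k : ℤ // k ≠ 0} => ω k))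
    (hωbd : (∑' k : {k : ℤ // k ≠ 0}, ω k) ≤ Cs * h ^ (-(2 * s)))
    (hCFL : τ ≤ h ^ (2 * s + m - 1) / (Cs * m * (2 * M) ^ (m - 1)))
    (hV0mono : Monotone (V 0)) (hV0bd : ∀ i, |V 0 i| ≤ M)
    (hW0mono : Monotone (W 0)) (hW0bd : ∀ i, |W 0 i| ≤ M)
    (hiterV : ∀ j i, V (j + 1) i = Sstep τ h m ω (V j) i)
    (hiterW : ∀ j i, W (j + 1) i = Sstep τ h m ω (W j) i) :
    ∀ C : ℝ, (∀ i, |W 0 i - V 0 i| ≤ C) → ∀ (j : ℕ) (i : ℤ), |W j i - V j i| ≤ C := by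
  intro C hC j
  have hcfl := mul_le_one_of_cfl hm hM hh hτ.le hCs hωbd hCFL
  have hVinv := monotone_and_abs_le_iterate hτ.le hh hm hM.le hωpos hωsum hcfl hV0mono hV0bd hiterV
  have hWinv := monotone_and_abs_le_iterate hτ.le hh hm hM.le hωpos hωsum hcfl hW0mono hW0bd hiterW
  have step : ∀ φ ψ : ℤ → ℝ, (Monotone φ ∧ ∀ i, |φ i| ≤ M) → (Monotone ψ ∧ ∀ i, |ψ i| ≤ M) →
      (∀ i, φ i ≤ ψ i + C) → ∀ i, Sstep τ h m ω φ i ≤ Sstep τ h m ω ψ i + C := by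
    intro φ ψ hφ hψ hle i
    rw [← Sstep_add_const]
    refine Sstep_mono hτ.le hh hm hωpos hωsum hcfl hφ.1 (hψ.1.add_const C)
      (sub_le_two_mul_of_abs_le hφ.2) (fun a b => ?_) hle i
    rw [add_sub_add_right_eq_sub]
    exact sub_le_two_mul_of_abs_le hψ.2 a b
  induction j with
  | zero => exact hC
  | succ j ih =>
    intro i
    have h₁ := step _ _ (hWinv j) (hVinv j) (fun a => by linarith [(abs_le.1 (ih a)).2]) i
    have h₂ := step _ _ (hVinv j) (hWinv j) (fun a => by linarith [(abs_le.1 (ih a)).1]) i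
    rw [hiterW, hiterV, abs_le]
    constructor <;> linarith
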